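/- There exists a 6-point metric space (X, d) that satisfies all ANN(n) inequalities for every positive integer n, but does not admit an isometric embedding into any CAT(0) space. -/

import Mathlib

/-!
The space carries two Euclidean comparison maps: a convex octahedron in `ℝ³`, and a bent copy of it
in `ℝ⁴` with the same edges but two shorter diagonals `aa'`, `bb'` and one longer diagonal `cc'`.
The distance is the larger of the two Euclidean distances.

An ANN inequality with weights `p` holds as soon as some contraction to a Euclidean space satisfies
`d(u, v) ≤ |φ u - z| + |φ v - z|` for all `u`, `v`, where `z` is the `p`-barycentre of the image.
The octahedron in `ℝ³` has this property unless `z` is close to the diagonal `cc'`; but then the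
barycentre in `ℝ⁴` is far from the diagonals `aa'` and `bb'`, and the bent octahedron has it.

In a CAT(0) space the square `aba'b'` would span a flat square, and `c`, `c'` would both be
at distance at most `48` from one of its points, whereas `d(c, c') = 120`.
-/

open scoped RealInnerProductSpace

universe u

section ANN

/-- The `ANN(n)` inequalities for a space `X`, for all families of `n` points and all weights. -/
def SatisfiesANN (n : ℕ) (X : Type*) [Dist X] : Prop :=
  ∀ (x : Fin n → X) (p q : Fin n → ℝ) (π : Fin n → Fin n → ℝ),
    (∀ i, 0 ≤ p i) → (∀ j, 0 ≤ q j) → (∀ i j, 0 ≤ π i j) →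
    (∑ i, p i = 1) → (∑ j, q j = 1) →
    (∀ i, ∑ j, π i j = p i + q i) →
    (1 / 2) * ∑ i, ∑ j,
        (if 0 < π i j + π j i then
          π i j * π j i / (π i j + π j i) * dist (x i) (x j) ^ 2 else 0)
      ≤ ∑ i, ∑ j, p i * q j * dist (x i) (x j) ^ 2

/-- Distances in `X` are at most the lengths of the detours through `z` between the images under
`φ`. -/
def DetourDominates {X E : Type*} [Dist X] [Dist E] (φ : X → E) (z : E) : Prop :=
  ∀ u v, dist u v ≤ dist (φ u) z + dist (φ v) z

variable {ι E : Type*} [Fintype ι] [NormedAddCommGroup E] [InnerProductSpace ℝ E]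

theorem sum_mul_dist_sq_eq_add_sum_mul_dist_barycenter_sq {p : ι → ℝ} (hp : ∑ i, p i = 1)
    (y : ι → E) (w : E) :
    ∑ i, p i * dist (y i) w ^ 2 =
      dist w (∑ k, p k • y k) ^ 2 + ∑ i, p i * dist (y i) (∑ k, p k • y k) ^ 2 := by
  set z := ∑ k, p k • y k with hz
  have expand (i : ι) : p i * dist (y i) w ^ 2 =
      p i * dist (y i) z ^ 2 + 2 * ⟪p i • y i - p i • z, z - w⟫ + p i * dist w z ^ 2 := by
    rw [dist_eq_norm, dist_eq_norm, dist_comm, dist_eq_norm, ← sub_add_sub_cancel (y i) z w,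
      norm_add_sq_real, ← smul_sub, real_inner_smul_left]
    ring
  have cross_terms : ∑ i, 2 * ⟪p i • y i - p i • z, z - w⟫ = 0 := by
    rw [← Finset.mul_sum, ← sum_inner, Finset.sum_sub_distrib, ← Finset.sum_smul, hp, ← hz,
      one_smul, sub_self, inner_zero_left, mul_zero]
  simp_rw [expand, Finset.sum_add_distrib, cross_terms, ← Finset.sum_mul, hp]
  ring

theorem sum_sum_mul_dist_sq_eq_sum_mul_dist_barycenter_sq {p q : ι → ℝ}
    (hp : ∑ i, p i = 1) (hq : ∑ i, q i = 1) (y : ι → E) :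
    ∑ i, ∑ j, p i * q j * dist (y i) (y j) ^ 2 =
      ∑ i, (p i + q i) * dist (y i) (∑ k, p k • y k) ^ 2 := by
  set z := ∑ k, p k • y k
  calc ∑ i, ∑ j, p i * q j * dist (y i) (y j) ^ 2
      = ∑ j, q j * ∑ i, p i * dist (y i) (y j) ^ 2 := by
        rw [Finset.sum_comm]
        simp_rw [Finset.mul_sum]
        exact Finset.sum_congr rfl fun j _ => Finset.sum_congr rfl fun i _ => by ring
    _ = ∑ j, q j * (dist (y j) z ^ 2 + ∑ i, p i * dist (y i) z ^ 2) := by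
        exact Finset.sum_congr rfl fun j _ => by
          rw [sum_mul_dist_sq_eq_add_sum_mul_dist_barycenter_sq hp]
    _ = ∑ i, (p i + q i) * dist (y i) z ^ 2 := by
        simp_rw [mul_add, add_mul, Finset.sum_add_distrib, ← Finset.sum_mul, hq]
        ring

theorem mul_div_add_mul_sq_le {a b d s t : ℝ} (ha : 0 ≤ a) (hb : 0 ≤ b) (hd : 0 ≤ d)
    (h : d ≤ s + t) : a * b / (a + b) * d ^ 2 ≤ a * s ^ 2 + b * t ^ 2 := by
  rcases (add_nonneg ha hb).eq_or_lt' with hab | hab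
  · rw [hab, div_zero, zero_mul]
    positivity
  calc a * b / (a + b) * d ^ 2 ≤ a * b / (a + b) * (s + t) ^ 2 := by gcongr
    _ = a * s ^ 2 + b * t ^ 2 - (a * s - b * t) ^ 2 / (a + b) := by field
    _ ≤ a * s ^ 2 + b * t ^ 2 := sub_le_self _ (by positivity)

theorem half_sum_mul_div_add_mul_sq_le {π d : ι → ι → ℝ} {g : ι → ℝ} (hπ : ∀ i j, 0 ≤ π i j)
    (hd : ∀ i j, 0 ≤ d i j) (hdg : ∀ i j, d i j ≤ g i + g j) :
    (1 / 2) * ∑ i, ∑ j,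
        (if 0 < π i j + π j i then π i j * π j i / (π i j + π j i) * d i j ^ 2 else 0)
      ≤ ∑ i, (∑ j, π i j) * g i ^ 2 := by
  have termwise (i j : ι) :
      (if 0 < π i j + π j i then π i j * π j i / (π i j + π j i) * d i j ^ 2 else 0)
        ≤ π i j * g i ^ 2 + π j i * g j ^ 2 := by
    split_ifs
    · exact mul_div_add_mul_sq_le (hπ i j) (hπ j i) (hd i j) (hdg i j)
    · have := hπ i j
      have := hπ j i
      positivity
  have symmetrize : ∑ i, ∑ j, (π i j * g i ^ 2 + π j i * g j ^ 2) =
      2 * ∑ i, (∑ j, π i j) * g i ^ 2 := by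
    simp_rw [Finset.sum_add_distrib]
    rw [Finset.sum_comm (f := fun i j => π j i * g j ^ 2)]
    simp_rw [← Finset.sum_mul]
    ring
  have := Finset.sum_le_sum fun i (_ : i ∈ Finset.univ) =>
    Finset.sum_le_sum fun j (_ : j ∈ Finset.univ) => termwise i j
  linarith

theorem SatisfiesANN.of_exists_contraction {X : Type*} [PseudoMetricSpace X] {n : ℕ}
    (h : ∀ (x : Fin n → X) (p : Fin n → ℝ), (∀ i, 0 ≤ p i) → ∑ i, p i = 1 →
      ∃ (E : Type u) (_ : NormedAddCommGroup E) (_ : InnerProductSpace ℝ E) (φ : X → E),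
        (∀ u v, dist (φ u) (φ v) ≤ dist u v) ∧ DetourDominates φ (∑ k, p k • φ (x k))) :
    SatisfiesANN n X := by
  intro x p q π hp hq hπ sum_p sum_q row_sum
  obtain ⟨E, _, _, φ, contraction, detour⟩ := h x p hp sum_p
  calc _ ≤ ∑ i, (∑ j, π i j) * dist (φ (x i)) (∑ k, p k • φ (x k)) ^ 2 :=
        half_sum_mul_div_add_mul_sq_le hπ (fun _ _ => dist_nonneg) fun i j => detour (x i) (x j)
    _ = ∑ i, ∑ j, p i * q j * dist (φ (x i)) (φ (x j)) ^ 2 := by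
        simp_rw [row_sum]
        exact (sum_sum_mul_dist_sq_eq_sum_mul_dist_barycenter_sq sum_p sum_q (φ ∘ x)).symm
    _ ≤ ∑ i, ∑ j, p i * q j * dist (x i) (x j) ^ 2 := by
        gcongr with i _ j _
        · exact mul_nonneg (hp i) (hq j)
        · exact contraction (x i) (x j)

end ANN

section Detour

theorem dist_sq_add_four_mul_inner_sq_le {E : Type*} [NormedAddCommGroup E]
    [InnerProductSpace ℝ E] {n u v : E} (hn : ‖n‖ = 1) (huv : ⟪n, u⟫ = ⟪n, v⟫) (z : E) :
    dist u v ^ 2 + 4 * ⟪n, z - u⟫ ^ 2 ≤ (dist u z + dist v z) ^ 2 := by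
  -- Heron's argument: `v'` is the mirror image of `v` in the hyperplane through `z` normal to `n`.
  set v' := v + (2 * ⟪n, z - u⟫) • n with hv'
  have dist_image : dist v' z = dist v z := by
    rw [← sq_eq_sq₀ dist_nonneg dist_nonneg, dist_eq_norm, dist_eq_norm, hv', add_sub_right_comm,
      norm_add_sq_real, norm_smul, real_inner_smul_right, real_inner_comm n, hn, mul_one,
      Real.norm_eq_abs, sq_abs, inner_sub_right, inner_sub_right, huv]
    ring
  have dist_sq_image : dist u v' ^ 2 = dist u v ^ 2 + 4 * ⟪n, z - u⟫ ^ 2 := by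
    have orthogonal : ⟪u - v, n⟫ = 0 := by
      rw [real_inner_comm, inner_sub_right, huv, sub_self]
    rw [dist_eq_norm, dist_eq_norm, hv', ← sub_sub, norm_sub_sq_real, real_inner_smul_right,
      orthogonal, norm_smul, hn, Real.norm_eq_abs, mul_one, sq_abs]
    ring
  rw [← dist_sq_image, ← dist_image]
  gcongr
  exact dist_triangle_right u v' z

theorem le_dist_add_dist_of_sq_le_coord {ι : Type*} [Fintype ι] {u v z : EuclideanSpace ℝ ι}
    {r : ℝ} (i : ι) (huv : u i = v i) (hr : r ^ 2 ≤ dist u v ^ 2 + 4 * (z i - u i) ^ 2) :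
    r ≤ dist u z + dist v z := by
  classical
  refine le_of_sq_le_sq (hr.trans ?_) (by positivity)
  simpa [EuclideanSpace.inner_single_left] using
    dist_sq_add_four_mul_inner_sq_le (n := EuclideanSpace.single i (1 : ℝ)) (u := u) (v := v)
      (by simp) (by simpa [EuclideanSpace.inner_single_left] using huv) z

end Detour

section CAT0

variable {Y : Type*} [PseudoMetricSpace Y] {a a' b b' x z P Q : Y} {r s t : ℝ}

/-- The CAT(0) comparison inequality at parameter `t`: in a CAT(0) space, `z` is the point dividing
the geodesic from `a` to `b` in the ratio `t : 1 - t`. -/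
def IsGeodesicPoint (a b : Y) (t : ℝ) (z : Y) : Prop :=
  ∀ w, dist w z ^ 2 ≤
    (1 - t) * dist w a ^ 2 + t * dist w b ^ 2 - t * (1 - t) * dist a b ^ 2

/-- The CAT(0) condition on a space, apart from completeness. -/
def SatisfiesCAT0 (Y : Type*) [PseudoMetricSpace Y] : Prop :=
  ∀ a b : Y, ∀ t ∈ Set.Icc (0 : ℝ) 1, ∃ z : Y, IsGeodesicPoint a b t z

theorem IsGeodesicPoint.dist_left_le (hz : IsGeodesicPoint a b t z) (ht : 0 ≤ t) :
    dist a z ≤ t * dist a b := by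
  refine le_of_sq_le_sq ?_ (by positivity)
  have := hz a
  rw [dist_self] at this
  linarith

theorem IsGeodesicPoint.dist_right_le (hz : IsGeodesicPoint a b t z) (ht : t ≤ 1) :
    dist b z ≤ (1 - t) * dist a b := by
  refine le_of_sq_le_sq ?_ (mul_nonneg (sub_nonneg.2 ht) dist_nonneg)
  have := hz b
  rw [dist_self, dist_comm b a] at this
  linarith

theorem IsGeodesicPoint.dist_left (hz : IsGeodesicPoint a b t z) (ht : t ∈ Set.Icc (0 : ℝ) 1) :
    dist a z = t * dist a b := by
  refine (hz.dist_left_le ht.1).antisymm ?_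
  linarith [hz.dist_right_le ht.2, dist_triangle_right a b z]

theorem IsGeodesicPoint.dist_right (hz : IsGeodesicPoint a b t z) (ht : t ∈ Set.Icc (0 : ℝ) 1) :
    dist b z = (1 - t) * dist a b := by
  refine (hz.dist_right_le ht.2).antisymm ?_
  linarith [hz.dist_left_le ht.1, dist_triangle_right a b z]

theorem SatisfiesCAT0.isGeodesicPoint_of_dist_le (hY : SatisfiesCAT0 Y)
    (ht : t ∈ Set.Icc (0 : ℝ) 1) (ha : dist x a ≤ t * dist a b)
    (hb : dist x b ≤ (1 - t) * dist a b) : IsGeodesicPoint a b t x := by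
  obtain ⟨z, hz⟩ := hY a b t ht
  have dist_sq_nonpos : dist x z ^ 2 ≤ 0 := by
    have : 0 ≤ 1 - t := sub_nonneg.2 ht.2
    have : 0 ≤ t := ht.1
    calc dist x z ^ 2
        ≤ (1 - t) * dist x a ^ 2 + t * dist x b ^ 2 - t * (1 - t) * dist a b ^ 2 := hz x
      _ ≤ (1 - t) * (t * dist a b) ^ 2 + t * ((1 - t) * dist a b) ^ 2
            - t * (1 - t) * dist a b ^ 2 := by gcongr
      _ = 0 := by ring
  have dist_eq_zero : dist x z = 0 := pow_eq_zero_iff two_ne_zero |>.1 <|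
    dist_sq_nonpos.antisymm (sq_nonneg _)
  intro w
  rw [PseudoMetricSpace.dist_eq_of_dist_zero w dist_eq_zero]
  exact hz w

-- Stewart's relation for the cevian from `w` to `x`, where `x` divides a geodesic of length
-- `(1 + s) * r` from `a` to `b`.
theorem SatisfiesCAT0.one_add_mul_dist_sq_le (hY : SatisfiesCAT0 Y) (hs : 0 ≤ s)
    (hxa : dist x a ≤ s * r) (hxb : dist x b ≤ r) (hab : (1 + s) * r ≤ dist a b) (w : Y) :
    (1 + s) * dist w x ^ 2 ≤
      dist w a ^ 2 + s * dist w b ^ 2 - s * ((1 + s) * r ^ 2) := by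
  have hr : 0 ≤ r := dist_nonneg.trans hxb
  have ratio_le_one : s / (1 + s) ≤ 1 := by
    rw [div_le_one (by positivity)]
    linarith
  have geodesic : IsGeodesicPoint a b (s / (1 + s)) x := by
    refine hY.isGeodesicPoint_of_dist_le ⟨by positivity, ratio_le_one⟩ ?_ ?_
    · calc dist x a ≤ s / (1 + s) * ((1 + s) * r) := hxa.trans_eq (by field)
        _ ≤ s / (1 + s) * dist a b := by gcongr
    · calc dist x b ≤ (1 - s / (1 + s)) * ((1 + s) * r) := hxb.trans_eq (by field)
        _ ≤ (1 - s / (1 + s)) * dist a b := by gcongr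
  calc (1 + s) * dist w x ^ 2
      ≤ (1 + s) * ((1 - s / (1 + s)) * dist w a ^ 2 + s / (1 + s) * dist w b ^ 2
          - s / (1 + s) * (1 - s / (1 + s)) * dist a b ^ 2) := by
        gcongr
        exact geodesic w
    _ = dist w a ^ 2 + s * dist w b ^ 2 - s / (1 + s) * dist a b ^ 2 := by field
    _ ≤ dist w a ^ 2 + s * dist w b ^ 2 - s / (1 + s) * ((1 + s) * r) ^ 2 := by gcongr
    _ = dist w a ^ 2 + s * dist w b ^ 2 - s * ((1 + s) * r ^ 2) := by field

theorem IsGeodesicPoint.dist_le_of_midpoint (hx : IsGeodesicPoint a a' (1 / 2) x)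
    (haa' : dist a a' = 2 * r) (hab : dist a b ^ 2 ≤ 2 * r ^ 2)
    (ha'b : dist a' b ^ 2 ≤ 2 * r ^ 2) : dist x b ≤ r := by
  refine le_of_sq_le_sq ?_ (by linarith [dist_nonneg (x := a) (y := a')])
  have := hx b
  rw [haa', dist_comm b x, dist_comm b a, dist_comm b a'] at this
  linarith

theorem SatisfiesCAT0.two_mul_sq_le_dist_sq (hY : SatisfiesCAT0 Y) (hs : s ∈ Set.Icc (0 : ℝ) 1)
    (hx : IsGeodesicPoint a a' (1 / 2) x) (haa' : dist a a' = 2 * r) (hxb : dist x b = r)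
    (ha'b : dist a' b ^ 2 ≤ 2 * r ^ 2)
    (hP : IsGeodesicPoint x a s P) (hQ : IsGeodesicPoint x b s Q) :
    2 * (s * r) ^ 2 ≤ dist P Q ^ 2 := by
  have half_mem : (1 / 2 : ℝ) ∈ Set.Icc (0 : ℝ) 1 := by norm_num
  have s_nonneg : 0 ≤ s := hs.1
  have xa : dist x a = r := by rw [dist_comm, hx.dist_left half_mem, haa']; ring
  have xa' : dist x a' = r := by rw [dist_comm, hx.dist_right half_mem, haa']; ring
  have xP : dist x P = s * r := by rw [hP.dist_left hs, xa]
  have aP : dist a P = (1 - s) * r := by rw [hP.dist_right hs, xa]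
  have xQ : dist x Q = s * r := by rw [hQ.dist_left hs, hxb]
  have Pa' : (1 + s) * r ≤ dist P a' := by linarith [dist_triangle a P a']
  have xQ_le : (1 + s) * dist Q x ^ 2 ≤
      dist Q P ^ 2 + s * dist Q a' ^ 2 - s * ((1 + s) * r ^ 2) :=
    hY.one_add_mul_dist_sq_le s_nonneg xP.le xa'.le Pa' Q
  rw [dist_comm Q x, dist_comm Q P, dist_comm Q a', xQ] at xQ_le
  have a'Q : dist a' Q ^ 2 ≤ (1 + s ^ 2) * r ^ 2 := by
    have := hQ a'
    rw [dist_comm a' x, xa', hxb] at this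
    linarith [mul_le_mul_of_nonneg_left ha'b s_nonneg]
  linarith [mul_le_mul_of_nonneg_left a'Q s_nonneg]

theorem SatisfiesCAT0.exists_dist_sq_le_of_square (hY : SatisfiesCAT0 Y)
    (hs : s ∈ Set.Icc (0 : ℝ) 1) (haa' : dist a a' = 2 * r) (hbb' : dist b b' = 2 * r)
    (hab : dist a b ^ 2 ≤ 2 * r ^ 2) (ha'b : dist a' b ^ 2 ≤ 2 * r ^ 2)
    (hab' : dist a b' ^ 2 ≤ 2 * r ^ 2) (ha'b' : dist a' b' ^ 2 ≤ 2 * r ^ 2) :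
    ∃ o, ∀ w, dist w o ^ 2 ≤ 1 / 2 * dist w a ^ 2 + s / 2 * dist w b ^ 2
      + (1 - s) / 2 * dist w a' ^ 2 - (1 - s ^ 2 / 2) * r ^ 2 := by
  have half_mem : (1 / 2 : ℝ) ∈ Set.Icc (0 : ℝ) 1 := by norm_num
  obtain ⟨x, hx⟩ := hY a a' (1 / 2) half_mem
  have xa : dist x a = r := by rw [dist_comm, hx.dist_left half_mem, haa']; ring
  have xb : dist x b = r := (hx.dist_le_of_midpoint haa' hab ha'b).antisymm <| by
    linarith [dist_triangle_left b b' x, hx.dist_le_of_midpoint haa' hab' ha'b']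
  obtain ⟨P, hP⟩ := hY x a s hs
  obtain ⟨Q, hQ⟩ := hY x b s hs
  obtain ⟨o, ho⟩ := hY P Q (1 / 2) half_mem
  refine ⟨o, fun w => ?_⟩
  have PQ := hY.two_mul_sq_le_dist_sq hs hx haa' xb ha'b hP hQ
  have wP := hP w
  have wQ := hQ w
  have wx := mul_le_mul_of_nonneg_left (hx w) (sub_nonneg.2 hs.2)
  rw [xa] at wP
  rw [xb] at wQ
  rw [haa'] at wx
  linarith [ho w]

end CAT0

/-- The six points of Lebedeva's space. They label the vertices of an octahedron, with `aa'`, `bb'`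
and `cc'` its diagonals. -/
inductive OctahedronVertex
  | a | a' | b | b' | c | c'
  deriving DecidableEq

namespace OctahedronVertex

instance : Fintype OctahedronVertex :=
  ⟨{a, a', b, b', c, c'}, fun v => by cases v <;> decide⟩

/-- The vertices of a nonregular convex octahedron in `ℝ³`. -/
noncomputable def octahedron : OctahedronVertex → EuclideanSpace ℝ (Fin 3)
  | a => !₂[365, 0, 0]
  | a' => !₂[-365, 0, 0]
  | b => !₂[0, 365, 0]
  | b' => !₂[0, -365, 0]
  | c => !₂[142, 142, 48]
  | c' => !₂[142, 142, -48]

/-- A deformation of `octahedron` in `ℝ⁴`. The numbers are chosen so that the twelve edges keep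
their lengths, while the diagonals `aa'` and `bb'` become shorter and `cc'` becomes longer. -/
noncomputable def bentOctahedron : OctahedronVertex → EuclideanSpace ℝ (Fin 4)
  | a => !₂[355, 0, 0, 60]
  | a' => !₂[-355, 0, 0, 60]
  | b => !₂[0, 355, 0, -60]
  | b' => !₂[0, -355, 0, -60]
  | c => !₂[146, 146, 60, 0]
  | c' => !₂[146, 146, -60, 0]

theorem octahedron_injective : Function.Injective octahedron := by
  intro u v h
  have coord (i : Fin 3) : octahedron u i = octahedron v i := by rw [h]
  have := coord 0
  have := coord 1
  have := coord 2
  cases u <;> cases v <;> first | rfl | (norm_num [octahedron] at *)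

/-- The larger of the distances in `octahedron` and in `bentOctahedron`. -/
noncomputable instance : MetricSpace OctahedronVertex :=
  MetricSpace.induced (fun v => (octahedron v, bentOctahedron v))
    (fun _ _ h => octahedron_injective (congrArg Prod.fst h)) inferInstance

theorem dist_eq_max (u v : OctahedronVertex) :
    dist u v = max (dist (octahedron u) (octahedron v))
      (dist (bentOctahedron u) (bentOctahedron v)) := rfl

theorem dist_eq_dist_octahedron {u v : OctahedronVertex} (h : s(u, v) ≠ s(c, c')) :
    dist u v = dist (octahedron u) (octahedron v) := by
  rw [dist_eq_max, max_eq_left_iff, EuclideanSpace.dist_eq, EuclideanSpace.dist_eq]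
  refine Real.sqrt_le_sqrt ?_
  cases u <;> cases v <;>
    first
    | (norm_num at h; done)
    | norm_num [octahedron, bentOctahedron, Fin.sum_univ_succ, Real.dist_eq]

theorem dist_eq_dist_bentOctahedron {u v : OctahedronVertex} (ha : s(u, v) ≠ s(a, a'))
    (hb : s(u, v) ≠ s(b, b')) :
    dist u v = dist (bentOctahedron u) (bentOctahedron v) := by
  rw [dist_eq_max, max_eq_right_iff, EuclideanSpace.dist_eq, EuclideanSpace.dist_eq]
  refine Real.sqrt_le_sqrt ?_
  cases u <;> cases v <;>
    first
    | (norm_num at ha; done)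
    | (norm_num at hb; done)
    | norm_num [octahedron, bentOctahedron, Fin.sum_univ_succ, Real.dist_eq]

theorem dist_sq_eq_sum_octahedron {u v : OctahedronVertex} (h : s(u, v) ≠ s(c, c')) :
    dist u v ^ 2 = ∑ i, (octahedron u i - octahedron v i) ^ 2 := by
  simp only [dist_eq_dist_octahedron h, EuclideanSpace.dist_sq_eq, Real.dist_eq, sq_abs]

theorem dist_a_a' : dist a a' = 730 := by
  rw [← sq_eq_sq₀ dist_nonneg (by norm_num), dist_sq_eq_sum_octahedron (by decide)]
  norm_num [octahedron, Fin.sum_univ_succ]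

theorem dist_b_b' : dist b b' = 730 := by
  rw [← sq_eq_sq₀ dist_nonneg (by norm_num), dist_sq_eq_sum_octahedron (by decide)]
  norm_num [octahedron, Fin.sum_univ_succ]

theorem dist_c_c' : dist c c' = 120 := by
  rw [dist_eq_dist_bentOctahedron (by decide) (by decide), ← sq_eq_sq₀ dist_nonneg (by norm_num),
    EuclideanSpace.dist_sq_eq]
  norm_num [bentOctahedron, Fin.sum_univ_succ, Real.dist_eq]

theorem dist_le_detour_of_sym2_eq {E : Type*} [Dist E] {φ : OctahedronVertex → E} {z : E}
    {u v u' v' : OctahedronVertex} (huv : s(u, v) = s(u', v'))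
    (h : dist u' v' ≤ dist (φ u') z + dist (φ v') z) :
    dist u v ≤ dist (φ u) z + dist (φ v) z := by
  rcases Sym2.eq_iff.1 huv with ⟨rfl, rfl⟩ | ⟨rfl, rfl⟩
  · exact h
  · rwa [dist_comm, add_comm]

theorem detourDominates_octahedron {z : EuclideanSpace ℝ (Fin 3)} (hz : z 0 ≤ 106 ∨ z 1 ≤ 106) :
    DetourDominates octahedron z := by
  have dist_cc' : dist (octahedron c) (octahedron c') ^ 2 = 96 ^ 2 := by
    norm_num [EuclideanSpace.dist_sq_eq, octahedron, Fin.sum_univ_succ, Real.dist_eq]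
  have detour_cc' : dist c c' ≤ dist (octahedron c) z + dist (octahedron c') z := by
    rw [dist_c_c']
    rcases hz with hz | hz
    · refine le_dist_add_dist_of_sq_le_coord 0 rfl ?_
      rw [dist_cc', show octahedron c 0 = 142 from rfl]
      nlinarith
    · refine le_dist_add_dist_of_sq_le_coord 1 rfl ?_
      rw [dist_cc', show octahedron c 1 = 142 from rfl]
      nlinarith
  intro u v
  by_cases huv : s(u, v) = s(c, c')
  · exact dist_le_detour_of_sym2_eq huv detour_cc'
  · rw [dist_eq_dist_octahedron huv]
    exact dist_triangle_right _ _ z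

theorem detourDominates_bentOctahedron {z : EuclideanSpace ℝ (Fin 4)} (hz₀ : 103 ≤ z 0)
    (hz₁ : 103 ≤ z 1) : DetourDominates bentOctahedron z := by
  have dist_aa' : dist (bentOctahedron a) (bentOctahedron a') ^ 2 = 710 ^ 2 := by
    norm_num [EuclideanSpace.dist_sq_eq, bentOctahedron, Fin.sum_univ_succ, Real.dist_eq]
  have detour_aa' : dist a a' ≤ dist (bentOctahedron a) z + dist (bentOctahedron a') z := by
    rw [dist_a_a']
    refine le_dist_add_dist_of_sq_le_coord 1 rfl ?_
    rw [dist_aa', show bentOctahedron a 1 = 0 from rfl]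
    nlinarith
  have dist_bb' : dist (bentOctahedron b) (bentOctahedron b') ^ 2 = 710 ^ 2 := by
    norm_num [EuclideanSpace.dist_sq_eq, bentOctahedron, Fin.sum_univ_succ, Real.dist_eq]
  have detour_bb' : dist b b' ≤ dist (bentOctahedron b) z + dist (bentOctahedron b') z := by
    rw [dist_b_b']
    refine le_dist_add_dist_of_sq_le_coord 0 rfl ?_
    rw [dist_bb', show bentOctahedron b 0 = 0 from rfl]
    nlinarith
  intro u v
  by_cases ha : s(u, v) = s(a, a')
  · exact dist_le_detour_of_sym2_eq ha detour_aa'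
  by_cases hb : s(u, v) = s(b, b')
  · exact dist_le_detour_of_sym2_eq hb detour_bb'
  rw [dist_eq_dist_bentOctahedron ha hb]
  exact dist_triangle_right _ _ z

-- `71 / 73 = 355 / 365` is the ratio of the shortened diagonals to the original ones.
theorem mul_octahedron_coord_le (v : OctahedronVertex) :
    71 / 73 * octahedron v 0 ≤ bentOctahedron v 0 ∧
      71 / 73 * octahedron v 1 ≤ bentOctahedron v 1 := by
  cases v <;> norm_num [octahedron, bentOctahedron]

theorem mul_barycenter_coord_le {ι : Type*} [Fintype ι] {p : ι → ℝ} (hp : ∀ i, 0 ≤ p i)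
    (x : ι → OctahedronVertex) :
    71 / 73 * (∑ k, p k • octahedron (x k)) 0 ≤ (∑ k, p k • bentOctahedron (x k)) 0 ∧
      71 / 73 * (∑ k, p k • octahedron (x k)) 1 ≤ (∑ k, p k • bentOctahedron (x k)) 1 := by
  simp only [WithLp.ofLp_sum, Finset.sum_apply, WithLp.ofLp_smul, Pi.smul_apply, smul_eq_mul,
    Finset.mul_sum, mul_left_comm (71 / 73 : ℝ)]
  constructor <;> gcongr with k
  · exact hp k
  · exact (mul_octahedron_coord_le (x k)).1
  · exact hp k
  · exact (mul_octahedron_coord_le (x k)).2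

theorem satisfiesANN (n : ℕ) : SatisfiesANN n OctahedronVertex := by
  refine .of_exists_contraction fun x p hp _ => ?_
  by_cases hz : (∑ k, p k • octahedron (x k)) 0 ≤ 106 ∨ (∑ k, p k • octahedron (x k)) 1 ≤ 106
  · exact ⟨_, _, inferInstance, octahedron, fun _ _ => le_max_left _ _,
      detourDominates_octahedron hz⟩
  · obtain ⟨hz₀, hz₁⟩ := not_or.1 hz
    obtain ⟨coord₀, coord₁⟩ := mul_barycenter_coord_le hp x
    exact ⟨_, _, inferInstance, bentOctahedron, fun _ _ => le_max_right _ _,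
      detourDominates_bentOctahedron (by linarith) (by linarith)⟩

theorem not_isometry_of_satisfiesCAT0 {Y : Type*} [PseudoMetricSpace Y] (hY : SatisfiesCAT0 Y)
    (f : OctahedronVertex → Y) : ¬ Isometry f := by
  intro hf
  have dist_sq {u v : OctahedronVertex} (h : s(u, v) ≠ s(c, c')) :
      dist (f u) (f v) ^ 2 = ∑ i, (octahedron u i - octahedron v i) ^ 2 := by
    rw [hf.dist_eq, dist_sq_eq_sum_octahedron h]
  have side {u v : OctahedronVertex} (hu : u = a ∨ u = a') (hv : v = b ∨ v = b') :
      dist (f u) (f v) ^ 2 ≤ 2 * 365 ^ 2 := by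
    rcases hu with rfl | rfl <;> rcases hv with rfl | rfl <;>
      · rw [dist_sq (by decide)]
        norm_num [octahedron, Fin.sum_univ_succ]
  obtain ⟨o, ho⟩ := hY.exists_dist_sq_le_of_square (s := 284 / 365) (r := 365) (by norm_num)
    (by rw [hf.dist_eq, dist_a_a']; norm_num) (by rw [hf.dist_eq, dist_b_b']; norm_num)
    (side (.inl rfl) (.inl rfl)) (side (.inr rfl) (.inl rfl))
    (side (.inl rfl) (.inr rfl)) (side (.inr rfl) (.inr rfl))
  have near {w : OctahedronVertex} (hw : w = c ∨ w = c') : dist (f w) o ≤ 48 := by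
    refine le_of_sq_le_sq ((ho (f w)).trans ?_) (by norm_num)
    rcases hw with rfl | rfl <;>
      · rw [dist_sq (by decide), dist_sq (by decide), dist_sq (by decide)]
        norm_num [octahedron, Fin.sum_univ_succ]
  have := dist_triangle_right (f c) (f c') o
  rw [hf.dist_eq, dist_c_c'] at this
  linarith [near (.inl rfl), near (.inr rfl)]

end OctahedronVertex

theorem exists_six_point_ANN_not_CAT0_general :
    ∃ (X : Type) (_ : MetricSpace X), Nat.card X = 6 ∧ (∀ n, SatisfiesANN n X) ∧
      ∀ (Y : Type u) [PseudoMetricSpace Y], SatisfiesCAT0 Y → ∀ f : X → Y, ¬ Isometry f :=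
  ⟨OctahedronVertex, inferInstance, Nat.card_eq_fintype_card, OctahedronVertex.satisfiesANN,
    fun _ _ => OctahedronVertex.not_isometry_of_satisfiesCAT0⟩

theorem exists_six_point_ANN_not_CAT0 :
    ∃ (X : Type) (_ : MetricSpace X),
      Nat.card X = 6 ∧
      (∀ (n : ℕ) (x : Fin n → X) (p q : Fin n → ℝ) (pi : Fin n → Fin n → ℝ),
        (∀ i, 0 ≤ p i) → (∀ j, 0 ≤ q j) → (∀ i j, 0 ≤ pi i j) →
        (∑ i, p i = 1) → (∑ j, q j = 1) →
        (∀ i, ∑ j, pi i j = p i + q i) →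
        (1 / 2) * ∑ i, ∑ j,
            (if 0 < pi i j + pi j i then
              pi i j * pi j i / (pi i j + pi j i) * dist (x i) (x j) ^ 2 else 0)
          ≤ ∑ i, ∑ j, p i * q j * dist (x i) (x j) ^ 2) ∧
      ¬ ∃ (Y : Type) (_ : MetricSpace Y) (_ : CompleteSpace Y),
          (∀ a b : Y, ∀ t ∈ Set.Icc (0 : ℝ) 1, ∃ z : Y, ∀ w : Y,
            dist w z ^ 2 ≤ (1 - t) * dist w a ^ 2 + t * dist w b ^ 2
              - t * (1 - t) * dist a b ^ 2) ∧
          ∃ f : X → Y, Isometry f := by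
  obtain ⟨X, _, card_eq, ann, not_isometry⟩ := exists_six_point_ANN_not_CAT0_general
  exact ⟨X, _, card_eq, ann, fun ⟨Y, _, _, hY, f, hf⟩ => not_isometry Y hY f hf⟩
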